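/- Let p be a prime, Q a cyclic group of order p, and N a finitely generated abelian group with an action of Q by group automorphisms such that N has no p-torsion (i.e. N[p] = 0). Then H^1(Q, N) is a finite elementary abelian p-group whose dimension as an 𝔽_p-vector space is at most (rank_ℤ N − rank_ℤ N^Q)/(p − 1), where rank_ℤ denotes the rank of a finitely generated abelian group. -/

import Mathlib

open scoped TensorProduct

section RepH1

variable {k : Type} [CommRing k] {G : Type} [Group G] {V : Type} [AddCommGroup V] [Module k V]

/-- The 1-cocycles of `G` with coefficients in the representation `ρ`. -/
def repOneCocycles (ρ : Representation k G V) : Submodule k (G → V) where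
  carrier := {f | ∀ σ τ, f (σ * τ) = f σ + ρ σ (f τ)}
  zero_mem' := by simp
  add_mem' := by
    intro f g hf hg σ τ
    simp only [Pi.add_apply, hf σ τ, hg σ τ, map_add]
    abel
  smul_mem' := by
    intro r f hf σ τ
    simp only [Pi.smul_apply, hf σ τ, map_smul, smul_add]

/-- The 1-coboundaries of `G` with coefficients in the representation `ρ`. -/
def repOneCoboundaries (ρ : Representation k G V) : Submodule k (G → V) where
  carrier := {f | ∃ v, ∀ σ, f σ = ρ σ v - v}
  zero_mem' := ⟨0, by simp⟩
  add_mem' := by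
    rintro f g ⟨v, hv⟩ ⟨w, hw⟩
    refine ⟨v + w, fun σ => ?_⟩
    simp only [Pi.add_apply, hv σ, hw σ, map_add]
    abel
  smul_mem' := by
    rintro r f ⟨v, hv⟩
    refine ⟨r • v, fun σ => ?_⟩
    simp only [Pi.smul_apply, hv σ, map_smul, smul_sub]

/-- The first group cohomology `H¹(G, ρ)`, defined as 1-cocycles modulo 1-coboundaries. -/
def repH1 (ρ : Representation k G V) : Type :=
  ↥(repOneCocycles ρ) ⧸
    (Submodule.comap (repOneCocycles ρ).subtype (repOneCoboundaries ρ))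

noncomputable instance (ρ : Representation k G V) : AddCommGroup (repH1 ρ) :=
  Submodule.Quotient.addCommGroup _

end RepH1

/-
Let `σ` generate `Q` and let `K` be the kernel of `1 + σ + ⋯ + σ ^ (p - 1)` on `N`. A cocycle is
determined by its value at `σ`, which lies in `K`, so `H¹(Q, N)` embeds as a set into
`K / (σ - 1) K`. On `K` the element `σ` is a root of the `p`-th cyclotomic polynomial, so `K` is a
module over the ring of integers `𝓞` of `ℚ(ζ)`, with `ζ` acting as `σ`. As `π = ζ - 1` is a prime
with residue field `𝔽_p` acting injectively on `K`, a family of elements of `K` that is independent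
modulo `π` is independent over `𝓞`: the coefficients of a relation are divisible by every power of
`π`. Hence the dimension of `K / π K` is at most `rank_𝓞 K ≤ rank_ℤ K / (p - 1)`. Finally `K` meets
`N^Q` trivially, because the norm acts on `N^Q` as `p`.
-/

open Cardinal Module NumberField
open scoped Pointwise

section RankReduction

variable {R M : Type*} [CommRing R] [AddCommGroup M] [Module R M] {π : R}

theorem pow_dvd_of_linearIndependent_quotSMulTop {ι : Type*} (hreg : IsSMulRegular M π) {v : ι → M}
    (hv : LinearIndependent (R ⧸ Ideal.span {π}) fun i =>
      (Submodule.Quotient.mk (v i) : QuotSMulTop π M))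
    (s : Finset ι) (n : ℕ) {c : ι → R} (hc : ∑ i ∈ s, c i • v i = 0) :
    ∀ i ∈ s, π ^ n ∣ c i := by
  induction n generalizing c with
  | zero => simp
  | succ n ih =>
    have hdvd : ∀ i ∈ s, π ∣ c i := by
      have hmod : ∑ i ∈ s, Ideal.Quotient.mk (Ideal.span {π}) (c i) •
          (Submodule.Quotient.mk (v i) : QuotSMulTop π M) = 0 := by
        simpa only [map_sum, map_zero] using! congrArg (Submodule.mkQ (π • ⊤ : Submodule R M)) hc
      intro i hi
      exact Ideal.mem_span_singleton.1 <| Ideal.Quotient.eq_zero_iff_mem.1 <|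
        linearIndependent_iff'.1 hv s _ hmod i hi
    have hquot (i : ι) : ∃ d, i ∈ s → c i = π * d := by
      by_cases hi : i ∈ s
      · exact (hdvd i hi).imp fun _ hd _ => hd
      · exact ⟨0, fun h => absurd h hi⟩
    choose d hd using hquot
    have hd0 : ∑ i ∈ s, d i • v i = 0 := hreg.right_eq_zero_of_smul <| by
      rw [← hc, Finset.smul_sum]
      exact Finset.sum_congr rfl fun i hi => by rw [hd i hi, mul_smul]
    intro i hi
    rw [hd i hi, pow_succ']
    exact mul_dvd_mul_left π (ih hd0 i hi)

variable [IsDomain R] [WfDvdMonoid R]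

theorem linearIndependent_of_linearIndependent_quotSMulTop {ι : Type*} (hπ : ¬IsUnit π)
    (hreg : IsSMulRegular M π) {v : ι → M} (hv : LinearIndependent (R ⧸ Ideal.span {π}) fun i =>
      (Submodule.Quotient.mk (v i) : QuotSMulTop π M)) :
    LinearIndependent R v := by
  refine linearIndependent_iff'.2 fun s c hc i hi => ?_
  by_contra hci
  obtain ⟨n, hn⟩ := FiniteMultiplicity.of_not_isUnit hπ hci
  exact hn (pow_dvd_of_linearIndependent_quotSMulTop hreg hv s (n + 1) hc i hi)

theorem rank_quotSMulTop_le (hπ : ¬IsUnit π) (hreg : IsSMulRegular M π) :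
    Module.rank (R ⧸ Ideal.span {π}) (QuotSMulTop π M) ≤ Module.rank R M := by
  rw [Module.rank]
  refine ciSup_le' fun ⟨s, hs⟩ => ?_
  have hlift : LinearIndependent R fun x : s => Quotient.out x.1 :=
    linearIndependent_of_linearIndependent_quotSMulTop hπ hreg <| by
      simpa only [Submodule.Quotient.mk_out] using! hs.linearIndependent
  exact hlift.cardinal_le_rank

end RankReduction

theorem finrank_mul_finrank_le {R S M : Type*} [CommRing R] [Nontrivial R] [CommRing S]
    [Algebra R S] [AddCommGroup M] [Module R M] [Module S M] [IsScalarTower R S M]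
    (h : Module.rank R M < ℵ₀) :
    finrank R S * finrank S M ≤ finrank R M := by
  obtain ⟨b, hb⟩ := exists_linearIndependent_of_le_finrank (le_refl (finrank R S))
  obtain ⟨c, hc⟩ := exists_linearIndependent_of_le_finrank (le_refl (finrank S M))
  have hbc := (linearIndependent_smul hb hc).cardinal_lift_le_rank
  simpa [finrank] using toNat_le_toNat hbc (by simpa using h)

theorem finite_and_natCard_quotSMulTop_le {S M : Type*} [CommRing S] [IsDomain S]
    [Module.Free ℤ S] [Module.Finite ℤ S] [AddCommGroup M] [Module S M] {π : S} (hπ : Prime π)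
    (hreg : IsSMulRegular M π) (hrank : Module.rank ℤ M < ℵ₀) :
    Finite (QuotSMulTop π M) ∧
      Nat.card (QuotSMulTop π M) ≤
        Nat.card (S ⧸ Ideal.span {π}) ^ (finrank ℤ M / finrank ℤ S) := by
  have : IsNoetherianRing S := IsNoetherianRing.of_finite ℤ S
  have : Finite (S ⧸ Ideal.span {π}) :=
    Ideal.finiteQuotientOfFreeOfNeBot _ (by simpa using hπ.ne_zero)
  have : (Ideal.span {π}).IsPrime := (Ideal.span_singleton_prime hπ.ne_zero).2 hπ
  let _ : Field (S ⧸ Ideal.span {π}) := (Finite.isField_of_domain (S ⧸ Ideal.span {π})).toField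
  have hrankS : Module.rank S M < ℵ₀ :=
    (rank_le_of_injective_injectiveₛ (algebraMap ℤ S) (AddMonoidHom.id M)
      (FaithfulSMul.algebraMap_injective ℤ S) Function.injective_id
      fun n x => by simp [Int.cast_smul_eq_zsmul]).trans_lt hrank
  have hle := rank_quotSMulTop_le hπ.not_isUnit hreg
  have : Module.Finite (S ⧸ Ideal.span {π}) (QuotSMulTop π M) :=
    rank_lt_aleph0_iff.1 (hle.trans_lt hrankS)
  refine ⟨Module.finite_of_finite (S ⧸ Ideal.span {π}), ?_⟩
  rw [natCard_eq_pow_finrank (K := S ⧸ Ideal.span {π})]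
  refine Nat.pow_le_pow_right Nat.card_pos ?_
  rw [Nat.le_div_iff_mul_le finrank_pos, mul_comm]
  calc finrank ℤ S * finrank (S ⧸ Ideal.span {π}) (QuotSMulTop π M)
      ≤ finrank ℤ S * finrank S M := Nat.mul_le_mul_left _ (toNat_le_toNat hle hrankS)
    _ ≤ finrank ℤ M := finrank_mul_finrank_le hrank

section CyclotomicAction

open Polynomial

theorem exists_ringOfIntegers_algHom_toInteger_eq {K A : Type*} [Field K] [CharZero K] {n : ℕ}
    [NeZero n] [IsCyclotomicExtension {n} ℚ K] {ζ : K} (hζ : IsPrimitiveRoot ζ n) [Ring A] {y : A}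
    (hy : aeval y (cyclotomic n ℤ) = 0) : ∃ φ : 𝓞 K →ₐ[ℤ] A, φ hζ.toInteger = y := by
  have hmin : minpoly ℤ hζ.integralPowerBasis.gen = cyclotomic n ℤ := by
    rw [hζ.integralPowerBasis_gen, ← RingOfIntegers.minpoly_coe]
    exact (cyclotomic_eq_minpoly hζ (NeZero.pos n)).symm
  refine ⟨hζ.integralPowerBasis.lift y (by rwa [hmin]), ?_⟩
  rw [← hζ.integralPowerBasis_gen, PowerBasis.lift_gen]

theorem natCard_quotient_span_toInteger_sub_one {p : ℕ} [Fact p.Prime] {K : Type*} [Field K]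
    [NumberField K] [IsCyclotomicExtension {p} ℚ K] {ζ : K} (hζ : IsPrimitiveRoot ζ p) :
    Nat.card (𝓞 K ⧸ Ideal.span {hζ.toInteger - 1}) = p := by
  have : IsCyclotomicExtension {p ^ (0 + 1)} ℚ K := by simpa
  have hζ' : IsPrimitiveRoot ζ (p ^ (0 + 1)) := by simpa
  exact IsCyclotomicExtension.Rat.absNorm_span_zeta_sub_one p 0 hζ'

end CyclotomicAction

section GeomSum

variable {R M : Type*} [Ring R] [AddCommGroup M] [Module R M] {T : Module.End R M}

theorem geom_sum_apply_of_apply_eq {x : M} (hx : T x = x) (n : ℕ) :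
    (∑ i ∈ Finset.range n, T ^ i) x = n • x := by
  have hpow (i : ℕ) : (T ^ i) x = x := by
    rw [Module.End.pow_apply]
    exact Function.iterate_fixed hx i
  simp [LinearMap.sum_apply, hpow]

theorem injective_sub_one_of_geom_sum_eq_zero {n : ℕ} (hT : ∑ i ∈ Finset.range n, T ^ i = 0)
    (htors : ∀ x : M, n • x = 0 → x = 0) : Function.Injective ⇑(T - 1) := by
  refine (injective_iff_map_eq_zero _).2 fun x hx => htors x ?_
  rw [← geom_sum_apply_of_apply_eq (sub_eq_zero.1 hx), hT, LinearMap.zero_apply]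

end GeomSum

theorem finite_and_natCard_quotient_range_sub_one_le {p : ℕ} (hp : p.Prime) {M : Type*}
    [AddCommGroup M] {T : Module.End ℤ M} (hrank : Module.rank ℤ M < ℵ₀)
    (hT : ∑ i ∈ Finset.range p, T ^ i = 0) (htors : ∀ x : M, p • x = 0 → x = 0) :
    Finite (M ⧸ (T - 1).range) ∧ Nat.card (M ⧸ (T - 1).range) ≤ p ^ (finrank ℤ M / (p - 1)) := by
  have : Fact p.Prime := ⟨hp⟩
  have : IsCyclotomicExtension {p} ℚ (CyclotomicField p ℚ) :=
    CyclotomicField.isCyclotomicExtension p ℚ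
  have hζ := IsCyclotomicExtension.zeta_spec p ℚ (CyclotomicField p ℚ)
  obtain ⟨φ, hφ⟩ := exists_ringOfIntegers_algHom_toInteger_eq hζ (y := T) <| by
    simpa [Polynomial.cyclotomic_prime] using hT
  let _ : Module (𝓞 (CyclotomicField p ℚ)) M := Module.compHom M φ.toRingHom
  have hsmul (x : M) : (hζ.toInteger - 1) • x = (T - 1) x := by
    change φ (hζ.toInteger - 1) x = _
    rw [map_sub, hφ, map_one]
  have hreg : IsSMulRegular M (hζ.toInteger - 1) := fun x y hxy =>
    injective_sub_one_of_geom_sum_eq_zero hT htors <| by simpa only [hsmul] using! hxy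
  have hfinrank : finrank ℤ (𝓞 (CyclotomicField p ℚ)) = p - 1 := by
    rw [RingOfIntegers.rank, IsCyclotomicExtension.Rat.finrank p, Nat.totient_prime hp]
  have hrange : ((hζ.toInteger - 1) • (⊤ : Submodule (𝓞 (CyclotomicField p ℚ)) M)).toAddSubgroup =
      (T - 1).range.toAddSubgroup := by
    ext x
    simp only [Submodule.mem_toAddSubgroup, Submodule.mem_smul_pointwise_iff_exists, hsmul,
      Submodule.mem_top, true_and, LinearMap.mem_range]
  obtain ⟨hfinite, hcard⟩ := finite_and_natCard_quotSMulTop_le hζ.zeta_sub_one_prime' hreg hrank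
  rw [natCard_quotient_span_toInteger_sub_one, hfinrank] at hcard
  have e : QuotSMulTop (hζ.toInteger - 1) M ≃+ M ⧸ (T - 1).range :=
    QuotientAddGroup.quotientAddEquivOfEq hrange
  exact ⟨Finite.of_equiv _ e.toEquiv, (Nat.card_congr e.toEquiv).symm.trans_le hcard⟩

section GeomSumKer

variable {R M : Type*} [Ring R] [AddCommGroup M] [Module R M]

/-- The kernel of `1 + T + ⋯ + T ^ (n - 1)`; when `T ^ n = 1` this is the kernel of the norm of the
cyclic group generated by `T`. -/
def geomSumKer (T : Module.End R M) (n : ℕ) : Submodule R M := (∑ i ∈ Finset.range n, T ^ i).ker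

theorem map_mem_geomSumKer (T : Module.End R M) (n : ℕ) {x : M} (hx : x ∈ geomSumKer T n) :
    T x ∈ geomSumKer T n := by
  have hcomm : Commute (∑ i ∈ Finset.range n, T ^ i) T :=
    Commute.sum_left _ _ _ fun i _ => (Commute.refl T).pow_left i
  rw [geomSumKer, LinearMap.mem_ker] at hx ⊢
  rw [← Module.End.mul_apply, hcomm.eq, Module.End.mul_apply, hx, map_zero]

/-- The endomorphism of `geomSumKer T n` induced by `T`. -/
def geomSumKer.restrict (T : Module.End R M) (n : ℕ) : Module.End R (geomSumKer T n) :=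
  LinearMap.restrict T fun _ => map_mem_geomSumKer T n

theorem geomSumKer.geom_sum_restrict_eq_zero (T : Module.End R M) (n : ℕ) :
    ∑ i ∈ Finset.range n, restrict T n ^ i = 0 := by
  ext x
  have hpow (i : ℕ) : ((restrict T n ^ i) x : M) = (T ^ i) x := by
    rw [restrict, Module.End.pow_restrict, LinearMap.coe_restrict_apply]
  calc ((∑ i ∈ Finset.range n, restrict T n ^ i) x : M)
      = (∑ i ∈ Finset.range n, T ^ i) x := by
        simp only [LinearMap.sum_apply, AddSubmonoidClass.coe_finsetSum, hpow]
    _ = 0 := x.2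

end GeomSumKer

theorem finrank_invariants_add_finrank_geomSumKer_le {G V : Type*} [Group G] [AddCommGroup V]
    (ρ : Representation ℤ G V) (σ : G) {n : ℕ} (hrank : Module.rank ℤ V < ℵ₀)
    (htors : ∀ x : V, n • x = 0 → x = 0) :
    finrank ℤ ρ.invariants + finrank ℤ (geomSumKer (ρ σ) n) ≤ finrank ℤ V := by
  have hdisj : ρ.invariants ⊓ geomSumKer (ρ σ) n = ⊥ :=
    (Submodule.eq_bot_iff _).2 fun x ⟨hinv, hker⟩ =>
      htors x <| (geom_sum_apply_of_apply_eq (hinv σ) n).symm.trans hker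
  have hle : Module.rank ℤ ρ.invariants + Module.rank ℤ (geomSumKer (ρ σ) n) ≤ Module.rank ℤ V := by
    rw [← Submodule.rank_sup_add_rank_inf_eq, hdisj, rank_bot, add_zero]
    exact Submodule.rank_le _
  have hlt (W : Submodule ℤ V) : Module.rank ℤ W < ℵ₀ := W.rank_le.trans_lt hrank
  simpa only [finrank, toNat_add (hlt _) (hlt _)] using toNat_le_toNat hle hrank

section OneCocycles

variable {k : Type} [CommRing k] {G : Type} [Group G] {V : Type} [AddCommGroup V] [Module k V]
  {ρ : Representation k G V} {f : G → V}

theorem repOneCocycles_map_one (hf : f ∈ repOneCocycles ρ) : f 1 = 0 := by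
  simpa using hf 1 1

theorem repOneCocycles_map_pow (hf : f ∈ repOneCocycles ρ) (σ : G) (n : ℕ) :
    f (σ ^ n) = (∑ i ∈ Finset.range n, ρ σ ^ i) (f σ) := by
  induction n with
  | zero => simp [repOneCocycles_map_one hf]
  | succ n ih => rw [pow_succ, hf, ih, Finset.sum_range_succ, LinearMap.add_apply, map_pow]

theorem repOneCocycles_apply_mem_geomSumKer (hf : f ∈ repOneCocycles ρ) {σ : G} {n : ℕ}
    (hσ : σ ^ n = 1) : f σ ∈ geomSumKer (ρ σ) n := by
  rw [geomSumKer, LinearMap.mem_ker, ← repOneCocycles_map_pow hf, hσ, repOneCocycles_map_one hf]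

theorem repOneCoboundaries_le_repOneCocycles (ρ : Representation k G V) :
    repOneCoboundaries ρ ≤ repOneCocycles ρ := by
  rintro f ⟨v, hv⟩ σ τ
  simp only [hv, map_mul, Module.End.mul_apply, map_sub]
  abel

theorem repOneCocycles_eq_zero_of_generator (hf : f ∈ repOneCocycles ρ) {σ : G}
    (hσ : ∀ τ, τ ∈ Subgroup.zpowers σ) (h0 : f σ = 0) : f = 0 := by
  let zeros : Subgroup G :=
    { carrier := {τ | f τ = 0}
      one_mem' := repOneCocycles_map_one hf
      mul_mem' := fun {a b} (ha : f a = 0) (hb : f b = 0) => by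
        simp [hf a b, ha, hb]
      inv_mem' := fun {a} (ha : f a = 0) => by
        have h := hf a⁻¹ a
        rw [inv_mul_cancel, repOneCocycles_map_one hf, ha, map_zero, add_zero] at h
        exact h.symm }
  exact funext fun τ => (Subgroup.zpowers_le (H := zeros)).2 h0 (hσ τ)

theorem mem_repOneCoboundaries_of_generator (hf : f ∈ repOneCocycles ρ) {σ : G}
    (hσ : ∀ τ, τ ∈ Subgroup.zpowers σ) (h : f σ ∈ (ρ σ - 1).range) :
    f ∈ repOneCoboundaries ρ := by
  obtain ⟨v, hv⟩ := h
  have hcob : (fun τ => ρ τ v - v) ∈ repOneCocycles ρ :=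
    repOneCoboundaries_le_repOneCocycles ρ ⟨v, fun _ => rfl⟩
  have hzero := repOneCocycles_eq_zero_of_generator (sub_mem hf hcob) hσ (by simp [← hv])
  exact ⟨v, fun τ => sub_eq_zero.1 (congrFun hzero τ)⟩

theorem natCard_nsmul_mem_repOneCoboundaries [Finite G] (hf : f ∈ repOneCocycles ρ) :
    Nat.card G • f ∈ repOneCoboundaries ρ := by
  have := Fintype.ofFinite G
  refine ⟨-∑ τ, f τ, fun σ => ?_⟩
  have hsum : ∑ τ, f τ = Nat.card G • f σ + ρ σ (∑ τ, f τ) :=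
    calc ∑ τ, f τ = ∑ τ, f (σ * τ) := (Equiv.sum_comp (Equiv.mulLeft σ) f).symm
      _ = ∑ τ, (f σ + ρ σ (f τ)) := Finset.sum_congr rfl fun τ _ => hf σ τ
      _ = Nat.card G • f σ + ρ σ (∑ τ, f τ) := by
        rw [Finset.sum_add_distrib, Finset.sum_const, Finset.card_univ, Nat.card_eq_fintype_card,
          map_sum]
  rw [Pi.smul_apply, map_neg, neg_sub_neg, eq_sub_iff_add_eq, ← hsum]

theorem natCard_nsmul_repH1_eq_zero [Finite G] (x : repH1 ρ) : Nat.card G • x = 0 := by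
  obtain ⟨f, rfl⟩ := Submodule.mkQ_surjective _ x
  exact (Submodule.Quotient.mk_eq_zero _).2 (natCard_nsmul_mem_repOneCoboundaries f.2)

-- The map `[f] ↦ f σ` is well defined only modulo `(ρ σ - 1) V`, which may be larger than
-- `(ρ σ - 1) (geomSumKer (ρ σ) n)`, so it is set up on chosen representatives.
theorem exists_injective_repH1_geomSumKer_quotient {σ : G} (hσ : ∀ τ, τ ∈ Subgroup.zpowers σ)
    {n : ℕ} (hσn : σ ^ n = 1) :
    ∃ φ : repH1 ρ → geomSumKer (ρ σ) n ⧸ (geomSumKer.restrict (ρ σ) n - 1).range,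
      Function.Injective φ := by
  let evalAt (f : repOneCocycles ρ) : geomSumKer (ρ σ) n :=
    ⟨f.1 σ, repOneCocycles_apply_mem_geomSumKer f.2 hσn⟩
  have hmk (x : repH1 ρ) : ∃ f : repOneCocycles ρ, Submodule.Quotient.mk f = x :=
    Submodule.mkQ_surjective _ x
  choose rep hrep using hmk
  refine ⟨fun x => Submodule.Quotient.mk (evalAt (rep x)), fun x y hxy => ?_⟩
  obtain ⟨v, hv⟩ := (Submodule.Quotient.eq _).1 hxy
  rw [← hrep x, ← hrep y]
  exact (Submodule.Quotient.eq _).2 <| mem_repOneCoboundaries_of_generator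
    (rep x - rep y).2 hσ ⟨v, congrArg Subtype.val hv⟩

end OneCocycles

theorem repH1_finite_elementaryAbelian_card_le_of_fg_general (p : ℕ) (hp : p.Prime) (Q : Type)
    [Group Q] (hcard : Nat.card Q = p) (N : Type) [AddCommGroup N] (hrank : Module.rank ℤ N < ℵ₀)
    (ρ : Representation ℤ Q N) (htors : ∀ x : N, p • x = 0 → x = 0) :
    Finite (repH1 ρ) ∧ (∀ x : repH1 ρ, p • x = 0) ∧
      Nat.card (repH1 ρ) ≤ p ^ ((finrank ℤ N - finrank ℤ ρ.invariants) / (p - 1)) := by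
  have : Fact p.Prime := ⟨hp⟩
  have : Finite Q := Nat.finite_of_card_ne_zero (hcard ▸ hp.ne_zero)
  obtain ⟨σ, hσ⟩ := (isCyclic_of_prime_card hcard).exists_generator
  obtain ⟨φ, hφ⟩ := exists_injective_repH1_geomSumKer_quotient (ρ := ρ) hσ
    (hcard ▸ pow_card_eq_one' : σ ^ p = 1)
  obtain ⟨hfin, hle⟩ := finite_and_natCard_quotient_range_sub_one_le hp
    ((Submodule.rank_le _).trans_lt hrank) (geomSumKer.geom_sum_restrict_eq_zero (ρ σ) p)
    fun x hx => Subtype.ext (htors x (congrArg Subtype.val hx))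
  refine ⟨Finite.of_injective φ hφ, hcard ▸ natCard_nsmul_repH1_eq_zero, ?_⟩
  calc Nat.card (repH1 ρ) ≤ p ^ (finrank ℤ (geomSumKer (ρ σ) p) / (p - 1)) :=
        (Nat.card_le_card_of_injective φ hφ).trans hle
    _ ≤ p ^ ((finrank ℤ N - finrank ℤ ρ.invariants) / (p - 1)) := by
        gcongr
        · exact hp.one_le
        · exact Nat.le_sub_of_add_le'
            (finrank_invariants_add_finrank_geomSumKer_le ρ σ hrank htors)

/-- Let `p` be a prime, `Q` a cyclic group of order `p`, and `N` a finitely generated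
abelian group with an action of `Q` by group automorphisms (equivalently, a representation
of `Q` on the `ℤ`-module `N`) such that `N` has no `p`-torsion.  Then `H¹(Q, N)` is a
finite elementary abelian `p`-group whose dimension as an `𝔽_p`-vector space is at most
`(rank_ℤ N − rank_ℤ N^Q)/(p − 1)`. -/
theorem repH1_finite_elementaryAbelian_card_le_of_fg
    (p : ℕ) (hp : p.Prime)
    (Q : Type) [Group Q] (hcyc : IsCyclic Q) (hcard : Nat.card Q = p)
    (N : Type) [AddCommGroup N] (hfg : AddGroup.FG N)
    (ρ : Representation ℤ Q N)
    (htors : ∀ x : N, p • x = 0 → x = 0) :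
    Finite (repH1 ρ) ∧ (∀ x : repH1 ρ, p • x = 0) ∧
      Nat.card (repH1 ρ) ≤
        p ^ ((Module.finrank ℤ N - Module.finrank ℤ ↥(Representation.invariants ρ)) / (p - 1)) :=
  repH1_finite_elementaryAbelian_card_le_of_fg_general p hp Q hcard N
    (have := Module.Finite.iff_addGroup_fg.2 hfg; rank_lt_aleph0 ℤ N) ρ htors
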